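/- arXiv:1508.03301 — 2 statements merged into one kernel-verified Lean document; each statement's English description precedes it below -/
import Mathlib

section
/- Let X be a Banach space, f : X → X a differentiable map, and Λ ⊆ X a compact set with f(Λ) = Λ on which f restricts to a homeomorphism of Λ whose inverse (f|_Λ)^{−1} is Lipschitz. Suppose there are α ∈ (0,1] and L' > 0 such that ‖Df_x − Df_y‖ ≤ L' |x − y|^α for all x, y ∈ Λ. Set b = sup_{x∈Λ} ‖Df_x‖ and L = max{Lip((f|_Λ)^{−1}), 1}. Then for every a > b L^α there exists M > 0 such that for all n ≥ 1 and all x, y ∈ Λ, ‖Df^n_{f^{−n}x} − Df^n_{f^{−n}y}‖ ≤ M aⁿ |x − y|^α. -/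
/-- `backDeriv f finv n x` is the composition
`Df_{f⁻¹x} ∘ Df_{f⁻²x} ∘ ⋯ ∘ Df_{f⁻ⁿx}`, i.e. the derivative of `f^n` along the
backward orbit of `x` (backward iterates being computed with `finv`). -/
noncomputable def backDeriv {X : Type*} [NormedAddCommGroup X] [NormedSpace ℝ X]
    (f finv : X → X) : ℕ → X → (X →L[ℝ] X)
  | 0, _ => ContinuousLinearMap.id ℝ X
  | n + 1, x => (backDeriv f finv n x).comp (fderiv ℝ f (finv^[n + 1] x))

/-- **Hölder estimate along backward orbits** (Lemma 5.11): if `f` is `C^{1+α}` on the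
compact invariant set `Λ` and `(f|Λ)⁻¹` is Lipschitz, then for every `a > b L^α` there
is `M` such that `‖Df^n_{f⁻ⁿx} − Df^n_{f⁻ⁿy}‖ ≤ M aⁿ |x − y|^α` on `Λ`. -/
theorem holder_estimate_backward_derivatives
    {X : Type*} [NormedAddCommGroup X] [NormedSpace ℝ X] [CompleteSpace X]
    (f finv : X → X) (Λ : Set X) (α L' b L : ℝ)
    (hdiff : Differentiable ℝ f)
    (hΛcomp : IsCompact Λ) (hfΛ : f '' Λ = Λ)
    -- `f|Λ` is a homeomorphism with inverse `finv`
    (hfinvΛ : ∀ x ∈ Λ, finv x ∈ Λ) (hfinv1 : ∀ x ∈ Λ, f (finv x) = x)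
    (hfinv2 : ∀ x ∈ Λ, finv (f x) = x) (hfinvC : ContinuousOn finv Λ)
    -- `(f|Λ)⁻¹` is Lipschitz with constant `L ≥ 1`
    (hL : 1 ≤ L) (hLip : ∀ x ∈ Λ, ∀ y ∈ Λ, ‖finv x - finv y‖ ≤ L * ‖x - y‖)
    -- the derivative is `α`-Hölder on `Λ`
    (hα : 0 < α) (hα1 : α ≤ 1) (hL' : 0 < L')
    (hHolder : ∀ x ∈ Λ, ∀ y ∈ Λ, ‖fderiv ℝ f x - fderiv ℝ f y‖ ≤ L' * ‖x - y‖ ^ α)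
    -- `b` bounds the derivative on `Λ`
    (hb : ∀ x ∈ Λ, ‖fderiv ℝ f x‖ ≤ b) :
    ∀ a : ℝ, b * L ^ α < a →
      ∃ M > 0, ∀ n : ℕ, 1 ≤ n → ∀ x ∈ Λ, ∀ y ∈ Λ,
        ‖backDeriv f finv n x - backDeriv f finv n y‖ ≤ M * a ^ n * ‖x - y‖ ^ α := by
  intro a ha
  rcases Λ.eq_empty_or_nonempty with h0 | ⟨z, hz⟩
  · exact ⟨1, one_pos, fun n _ x hx => by simp [h0] at hx⟩
  have hb0 : 0 ≤ b := (norm_nonneg _).trans (hb z hz)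
  have hL0 : 0 ≤ L := by linarith
  have hK : 1 ≤ L ^ α := Real.one_le_rpow hL hα.le
  have hba : b < a := by nlinarith
  have hmem : ∀ n : ℕ, ∀ x ∈ Λ, finv^[n] x ∈ Λ := by
    intro n
    induction n with
    | zero => intro x hx; simpa using hx
    | succ k ih =>
      intro x hx
      rw [Function.iterate_succ_apply]
      exact ih _ (hfinvΛ x hx)
  have hlip : ∀ n : ℕ, ∀ x ∈ Λ, ∀ y ∈ Λ, ‖finv^[n] x - finv^[n] y‖ ≤ L ^ n * ‖x - y‖ := by
    intro n
    induction n with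
    | zero => intro x hx y hy; simp
    | succ k ih =>
      intro x hx y hy
      rw [Function.iterate_succ_apply', Function.iterate_succ_apply']
      calc _ ≤ L * ‖finv^[k] x - finv^[k] y‖ := hLip _ (hmem k x hx) _ (hmem k y hy)
        _ ≤ L * (L ^ k * ‖x - y‖) := mul_le_mul_of_nonneg_left (ih x hx y hy) hL0
        _ = _ := by ring
  have hD : ∀ n : ℕ, ∀ x ∈ Λ, ‖backDeriv f finv n x‖ ≤ b ^ n := by
    intro n
    induction n with
    | zero =>
      intro x hx
      simpa [backDeriv] using (ContinuousLinearMap.norm_id_le (𝕜 := ℝ) (E := X))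
    | succ k ih =>
      intro x hx
      rw [backDeriv, pow_succ]
      exact (ContinuousLinearMap.opNorm_comp_le _ _).trans
        (mul_le_mul (ih x hx) (hb _ (hmem _ x hx)) (norm_nonneg _) (by positivity))
  have hab : 0 < a - b := by linarith
  have hK0 : 0 < L ^ α := by linarith
  refine ⟨L' * L ^ α / (a - b), by positivity, ?_⟩
  set M := L' * L ^ α / (a - b) with hM
  have hMe : M * (a - b) = L' * L ^ α := div_mul_cancel₀ _ hab.ne'
  have hM0 : 0 < M := by positivity
  have ha0 : 0 < a := by linarith
  suffices H : ∀ n : ℕ, ∀ x ∈ Λ, ∀ y ∈ Λ,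
      ‖backDeriv f finv n x - backDeriv f finv n y‖ ≤ M * a ^ n * ‖x - y‖ ^ α from
    fun n _ => H n
  intro n
  induction n with
  | zero =>
    intro x hx y hy
    simp only [backDeriv, sub_self, norm_zero]
    positivity
  | succ n ih =>
    intro x hx y hy
    have hd : 0 ≤ ‖x - y‖ ^ α := by positivity
    have hx' := hmem (n + 1) x hx
    have hy' := hmem (n + 1) y hy
    have e : backDeriv f finv (n + 1) x - backDeriv f finv (n + 1) y
        = (backDeriv f finv n x - backDeriv f finv n y).comp (fderiv ℝ f (finv^[n + 1] x))
        + (backDeriv f finv n y).comp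
          (fderiv ℝ f (finv^[n + 1] x) - fderiv ℝ f (finv^[n + 1] y)) := by
      simp only [backDeriv, ContinuousLinearMap.comp_sub, ContinuousLinearMap.sub_comp]
      abel
    have h1 : ‖fderiv ℝ f (finv^[n + 1] x) - fderiv ℝ f (finv^[n + 1] y)‖
        ≤ L' * ((L ^ α) ^ (n + 1) * ‖x - y‖ ^ α) := by
      refine (hHolder _ hx' _ hy').trans (mul_le_mul_of_nonneg_left ?_ hL'.le)
      calc _ ≤ (L ^ (n + 1) * ‖x - y‖) ^ α :=
            Real.rpow_le_rpow (norm_nonneg _) (hlip _ x hx y hy) hα.le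
        _ = _ := by
            rw [Real.mul_rpow (by positivity) (norm_nonneg _), Real.rpow_pow_comm hL0]
    have hpow : (b * L ^ α) ^ n ≤ a ^ n := pow_le_pow_left₀ (by positivity) ha.le n
    rw [e]
    calc _ ≤ ‖backDeriv f finv n x - backDeriv f finv n y‖ * ‖fderiv ℝ f (finv^[n + 1] x)‖
          + ‖backDeriv f finv n y‖ *
            ‖fderiv ℝ f (finv^[n + 1] x) - fderiv ℝ f (finv^[n + 1] y)‖ :=
          (norm_add_le _ _).trans (add_le_add (ContinuousLinearMap.opNorm_comp_le _ _)
            (ContinuousLinearMap.opNorm_comp_le _ _))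
      _ ≤ (M * a ^ n * ‖x - y‖ ^ α) * b
          + b ^ n * (L' * ((L ^ α) ^ (n + 1) * ‖x - y‖ ^ α)) :=
          add_le_add (mul_le_mul (ih x hx y hy) (hb _ hx') (norm_nonneg _) (by positivity))
            (mul_le_mul (hD n y hy) h1 (norm_nonneg _) (by positivity))
      _ = (M * a ^ n * ‖x - y‖ ^ α) * b
          + (b * L ^ α) ^ n * (L' * L ^ α * ‖x - y‖ ^ α) := by rw [mul_pow]; ring
      _ ≤ (M * a ^ n * ‖x - y‖ ^ α) * b + a ^ n * (L' * L ^ α * ‖x - y‖ ^ α) := by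
          gcongr
      _ = M * a ^ (n + 1) * ‖x - y‖ ^ α := by rw [← hMe]; ring
end

section
/- Let l₀ > 0 and λ₂ < λ₁ be given. Let Γ^s ⊆ Λ and suppose that for each x ∈ Γ^s there are closed subspaces E^u(x), E^s(x) satisfying: (S1) X = E^u(x) ⊕ E^s(x); (S2) |Df^n_x v| ≥ l₀^{−1} e^{nλ₁} |v| for all v ∈ E^u(x) and all n ≥ 0; (S3) ‖Df^n_x|_{E^s(x)}‖ ≤ l₀ e^{nλ₂} for all n ≥ 0; (S4) the projections associated with the splitting X = E^u(x) ⊕ E^s(x) have norm at most l₀. Then for every a > max{e^{λ₁}, b L^α}, where b = sup_{x∈Λ} ‖Df_x‖ and L = max{1, Lip(f|_Λ)}, there exists K > 0 such that dist(E^s(x), E^s(y)) ≤ K |x − y|^β for all x, y ∈ Γ^s, with exponent β = α(λ₁ − λ₂)/(log a − λ₂). -/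
/-- Kato's gap metric between two subspaces: the Hausdorff distance between their
intersections with the unit sphere. -/
noncomputable def gapDist {X : Type*} [NormedAddCommGroup X] [NormedSpace ℝ X]
    (E F : Submodule ℝ X) : ℝ :=
  Metric.hausdorffDist ((E : Set X) ∩ Metric.sphere 0 1) ((F : Set X) ∩ Metric.sphere 0 1)

/-- `fwdDeriv f n x = Df_{f^{n-1}x} ∘ ⋯ ∘ Df_{fx} ∘ Df_x`, the derivative of `f^n`
at `x`. -/
noncomputable def fwdDeriv {X : Type*} [NormedAddCommGroup X] [NormedSpace ℝ X]
    (f : X → X) : ℕ → X → (X →L[ℝ] X)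
  | 0, _ => ContinuousLinearMap.id ℝ X
  | n + 1, x => (fderiv ℝ f (f^[n] x)).comp (fwdDeriv f n x)

theorem aux_iter_mem {X : Type*} (f : X → X) (S : Set X) (hf : f '' S ⊆ S) {x : X} (hx : x ∈ S) (n : ℕ) :
    f^[n] x ∈ S := by
  induction n with
  | zero => simpa using hx
  | succ n ih => rw [Function.iterate_succ_apply']; exact hf ⟨_, ih, rfl⟩

theorem aux_bound {X : Type*} [NormedAddCommGroup X] [NormedSpace ℝ X]
    (f : X → X) (S : Set X) (α L' L b a : ℝ) (hf : f '' S ⊆ S)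
    (hα : 0 < α) (hL' : 0 < L')
    (hHolder : ∀ x ∈ S, ∀ y ∈ S, ‖fderiv ℝ f x - fderiv ℝ f y‖ ≤ L' * ‖x - y‖ ^ α)
    (hL : 1 ≤ L) (hLip : ∀ x ∈ S, ∀ y ∈ S, ‖f x - f y‖ ≤ L * ‖x - y‖)
    (hb : ∀ x ∈ S, ‖fderiv ℝ f x‖ ≤ b) (ha : b * L ^ α < a)
    {x y : X} (hx : x ∈ S) (hy : y ∈ S) (n : ℕ) :
    ‖fwdDeriv f n x - fwdDeriv f n y‖ ≤ L' / (a - b) * a ^ n * ‖x - y‖ ^ α := by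
  have hb0 : 0 ≤ b := (norm_nonneg _).trans (hb x hx)
  have hLα : 1 ≤ L ^ α := Real.one_le_rpow hL hα.le
  have hba : b < a := lt_of_le_of_lt (by nlinarith) ha
  have hd : ∀ n : ℕ, ‖f^[n] x - f^[n] y‖ ^ α ≤ (L ^ α) ^ n * ‖x - y‖ ^ α := by
    intro n
    induction n with
    | zero => simp
    | succ n ih =>
      rw [Function.iterate_succ_apply', Function.iterate_succ_apply']
      calc _ ≤ (L * ‖f^[n] x - f^[n] y‖) ^ α :=
            Real.rpow_le_rpow (norm_nonneg _)
              (hLip _ (aux_iter_mem f S hf hx n) _ (aux_iter_mem f S hf hy n)) hα.le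
        _ = L ^ α * ‖f^[n] x - f^[n] y‖ ^ α := Real.mul_rpow (by linarith) (norm_nonneg _)
        _ ≤ L ^ α * ((L ^ α) ^ n * ‖x - y‖ ^ α) := by gcongr
        _ = _ := by ring
  have hn : ∀ n : ℕ, ‖fwdDeriv f n y‖ ≤ b ^ n := by
    intro n
    induction n with
    | zero => simpa [fwdDeriv] using ContinuousLinearMap.norm_id_le (𝕜 := ℝ) (E := X)
    | succ n ih =>
      calc _ ≤ ‖fderiv ℝ f (f^[n] y)‖ * ‖fwdDeriv f n y‖ := ContinuousLinearMap.opNorm_comp_le _ _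
        _ ≤ b * b ^ n := by
          gcongr
          exact hb _ (aux_iter_mem f S hf hy n)
        _ = _ := by ring
  induction n with
  | zero =>
    simp only [fwdDeriv, sub_self, norm_zero]
    have : 0 < a - b := by linarith
    positivity
  | succ n ih =>
    have e : fwdDeriv f (n+1) x - fwdDeriv f (n+1) y
      = (fderiv ℝ f (f^[n] x)).comp (fwdDeriv f n x - fwdDeriv f n y)
        + (fderiv ℝ f (f^[n] x) - fderiv ℝ f (f^[n] y)).comp (fwdDeriv f n y) := by
      ext v; simp [fwdDeriv]
    have hab : 0 < a - b := by linarith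
    have h1 : ‖(fderiv ℝ f (f^[n] x)).comp (fwdDeriv f n x - fwdDeriv f n y)‖
        ≤ b * (L' / (a - b) * a ^ n * ‖x - y‖ ^ α) :=
      (ContinuousLinearMap.opNorm_comp_le _ _).trans
        (mul_le_mul (hb _ (aux_iter_mem f S hf hx n)) ih (norm_nonneg _) hb0)
    have h2 : ‖(fderiv ℝ f (f^[n] x) - fderiv ℝ f (f^[n] y)).comp (fwdDeriv f n y)‖
        ≤ L' * a ^ n * ‖x - y‖ ^ α := by
      calc _ ≤ ‖fderiv ℝ f (f^[n] x) - fderiv ℝ f (f^[n] y)‖ * ‖fwdDeriv f n y‖ :=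
            ContinuousLinearMap.opNorm_comp_le _ _
        _ ≤ (L' * ((L ^ α) ^ n * ‖x - y‖ ^ α)) * b ^ n := by
            refine mul_le_mul ?_ (hn n) (norm_nonneg _) (by positivity)
            refine (hHolder _ (aux_iter_mem f S hf hx n) _ (aux_iter_mem f S hf hy n)).trans ?_
            exact mul_le_mul_of_nonneg_left (hd n) hL'.le
        _ = L' * (b * L ^ α) ^ n * ‖x - y‖ ^ α := by rw [mul_pow]; ring
        _ ≤ _ := by gcongr
    rw [e]
    refine (norm_add_le _ _).trans ((add_le_add h1 h2).trans (le_of_eq ?_))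
    field_simp
    ring

theorem aux_unit {X : Type*} [NormedAddCommGroup X] [NormedSpace ℝ X] (F : Submodule ℝ X)
    (hF : ((F : Set X) ∩ Metric.sphere 0 1).Nonempty) (v w : X) (hv : ‖v‖ = 1) (hw : w ∈ F)
    (ε : ℝ) (h : ‖v - w‖ ≤ ε) :
    ∃ z ∈ (F : Set X) ∩ Metric.sphere 0 1, dist v z ≤ 2 * ε := by
  by_cases h0 : w = 0
  · obtain ⟨z, hz⟩ := hF
    refine ⟨z, hz, ?_⟩
    have hz1 : ‖z‖ = 1 := by simpa using hz.2
    rw [h0, sub_zero] at h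
    rw [dist_eq_norm]
    linarith [norm_sub_le v z]
  · have hw0 : 0 < ‖w‖ := norm_pos_iff.2 h0
    refine ⟨‖w‖⁻¹ • w, ⟨F.smul_mem _ hw, ?_⟩, ?_⟩
    · simp [norm_smul, hw0.ne']
    · have e : ‖w - ‖w‖⁻¹ • w‖ = |‖w‖ - ‖v‖| := by
        have : w - ‖w‖⁻¹ • w = (1 - ‖w‖⁻¹) • w := by rw [sub_smul, one_smul]
        rw [this, norm_smul, Real.norm_eq_abs, hv]
        nth_rw 2 [← abs_of_pos hw0]
        rw [← abs_mul]
        congr 1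
        field_simp
      rw [dist_eq_norm]
      have h1 := norm_sub_le_norm_sub_add_norm_sub v w (‖w‖⁻¹ • w)
      have h2 := abs_norm_sub_norm_le w v
      rw [norm_sub_rev w v] at h2
      linarith

theorem aux_gap {X : Type*} [NormedAddCommGroup X] [NormedSpace ℝ X] (E F : Submodule ℝ X)
    (ε : ℝ) (hε : 0 ≤ ε)
    (h1 : ∀ v ∈ E, ‖v‖ = 1 → ∃ w ∈ F, ‖v - w‖ ≤ ε)
    (h2 : ∀ v ∈ F, ‖v‖ = 1 → ∃ w ∈ E, ‖v - w‖ ≤ ε) : gapDist E F ≤ 2 * ε := by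
  unfold gapDist
  rcases Set.eq_empty_or_nonempty ((E : Set X) ∩ Metric.sphere 0 1) with hE | hE
  · rw [hE, Metric.hausdorffDist_empty']; positivity
  rcases Set.eq_empty_or_nonempty ((F : Set X) ∩ Metric.sphere 0 1) with hF | hF
  · rw [hF, Metric.hausdorffDist_empty]; positivity
  apply Metric.hausdorffDist_le_of_mem_dist (by positivity)
  · rintro v ⟨hv, hv1⟩
    have hv1 : ‖v‖ = 1 := by simpa using hv1
    obtain ⟨w, hw, h⟩ := h1 v hv hv1
    exact aux_unit F hF v w hv1 hw ε h
  · rintro v ⟨hv, hv1⟩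
    have hv1 : ‖v‖ = 1 := by simpa using hv1
    obtain ⟨w, hw, h⟩ := h2 v hv hv1
    exact aux_unit E hE v w hv1 hw ε h

/-- choice of the iterate `n` -/
theorem aux_choose (d α l1 l2 a : ℝ) (hd : 0 < d) (hd1 : d ≤ 1) (hα : 0 < α) (hl : l2 < l1)
    (ha0 : 0 < a) (ha : l1 < Real.log a) :
    ∃ n : ℕ, a ^ n * d ^ α ≤ Real.exp (n * l2) ∧
      Real.exp (n * l2) ≤ Real.exp (n * l1) *
        (Real.exp (l1 - l2) * d ^ (α * (l1 - l2) / (Real.log a - l2))) := by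
  have hq : 0 < Real.log a - l2 := by linarith
  have hlog : Real.log d ≤ 0 := Real.log_nonpos hd.le hd1
  set t := -(α * Real.log d) / (Real.log a - l2) with ht
  have ht0 : 0 ≤ t := div_nonneg (by nlinarith) hq.le
  have htq : t * (Real.log a - l2) = -(α * Real.log d) := by rw [ht]; field_simp
  have hβ : Real.log d * (α * (l1 - l2) / (Real.log a - l2)) = - (t * (l1 - l2)) := by
    rw [ht]; field_simp
  refine ⟨⌊t⌋₊, ?_, ?_⟩
  · have h := Nat.floor_le ht0
    have e : a ^ ⌊t⌋₊ = Real.exp (⌊t⌋₊ * Real.log a) := by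
      rw [Real.exp_nat_mul, Real.exp_log ha0]
    rw [e, Real.rpow_def_of_pos hd, ← Real.exp_add, Real.exp_le_exp]
    nlinarith
  · have h := Nat.lt_floor_add_one t
    rw [Real.rpow_def_of_pos hd, hβ, ← Real.exp_add, ← Real.exp_add, Real.exp_le_exp]
    nlinarith

/-- **Hölder continuity of stable spaces** (Proposition 5.12): on the set `Γˢ` of points
satisfying (S1)–(S4), the stable space `E^s(x)` is Hölder continuous in the gap metric
with exponent `β = α(λ₁ − λ₂)/(log a − λ₂)`, for every `a > max{e^{λ₁}, b L^α}`. -/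
theorem stable_space_holder_continuity
    {X : Type*} [NormedAddCommGroup X] [NormedSpace ℝ X] [CompleteSpace X]
    (f : X → X) (Λ Γs : Set X) (α L' l₀ lam1 lam2 : ℝ)
    (Eu Es : X → Submodule ℝ X) (pu ps : X → X →L[ℝ] X)
    (hdiff : Differentiable ℝ f)
    (hΛcomp : IsCompact Λ) (hfΛ : f '' Λ ⊆ Λ)
    (hα : 0 < α) (hα1 : α ≤ 1) (hL' : 0 < L')
    (hHolder : ∀ x ∈ Λ, ∀ y ∈ Λ, ‖fderiv ℝ f x - fderiv ℝ f y‖ ≤ L' * ‖x - y‖ ^ α)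
    (hl₀ : 0 < l₀) (hlam : lam2 < lam1)
    (hΓs : Γs ⊆ Λ)
    -- (S1): splitting into closed complementary subspaces
    (hS1 : ∀ x ∈ Γs, IsCompl (Eu x) (Es x) ∧
      IsClosed (Eu x : Set X) ∧ IsClosed (Es x : Set X))
    -- (S2): expansion on `E^u(x)`
    (hS2 : ∀ x ∈ Γs, ∀ n : ℕ, ∀ v ∈ Eu x,
      l₀⁻¹ * Real.exp (n * lam1) * ‖v‖ ≤ ‖fwdDeriv f n x v‖)
    -- (S3): contraction/domination on `E^s(x)`
    (hS3 : ∀ x ∈ Γs, ∀ n : ℕ, ∀ v ∈ Es x,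
      ‖fwdDeriv f n x v‖ ≤ l₀ * Real.exp (n * lam2) * ‖v‖)
    -- (S4): norms of the associated projections
    (hS4proj : ∀ x ∈ Γs, ∀ v : X,
      pu x v ∈ Eu x ∧ ps x v ∈ Es x ∧ pu x v + ps x v = v)
    (hS4 : ∀ x ∈ Γs, ‖pu x‖ ≤ l₀ ∧ ‖ps x‖ ≤ l₀)
    -- `L ≥ 1` is a Lipschitz constant for `f` on `Λ`, `b` bounds `‖Df‖` on `Λ`
    (L b : ℝ) (hL : 1 ≤ L) (hLip : ∀ x ∈ Λ, ∀ y ∈ Λ, ‖f x - f y‖ ≤ L * ‖x - y‖)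
    (hb : ∀ x ∈ Λ, ‖fderiv ℝ f x‖ ≤ b) :
    ∀ a : ℝ, max (Real.exp lam1) (b * L ^ α) < a →
      ∃ K > 0, ∀ x ∈ Γs, ∀ y ∈ Γs,
        gapDist (Es x) (Es y) ≤
          K * ‖x - y‖ ^ (α * (lam1 - lam2) / (Real.log a - lam2)) := by
  intro a ha
  have ha1 : Real.exp lam1 < a := (le_max_left _ _).trans_lt ha
  have ha2 : b * L ^ α < a := (le_max_right _ _).trans_lt ha
  have ha0 : 0 < a := (Real.exp_pos _).trans ha1
  have hlog : lam1 < Real.log a := (Real.lt_log_iff_exp_lt ha0).2 ha1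
  set β := α * (lam1 - lam2) / (Real.log a - lam2) with hβ
  have hβ0 : 0 < β := div_pos (mul_pos hα (by linarith)) (by linarith)
  set C := |L' / (a - b)| with hC
  have hC0 : 0 ≤ C := abs_nonneg _
  set M := l₀ * (l₀ + l₀ * l₀ + C) * Real.exp (lam1 - lam2) with hM
  have hM0 : 0 < M := by positivity
  have key : ∀ x ∈ Γs, ∀ y ∈ Γs, x ≠ y → ∀ v ∈ Es x, ‖v‖ = 1 →
      ∃ w ∈ Es y, ‖v - w‖ ≤ (M + l₀) * ‖x - y‖ ^ β := by
    intro x hx y hy hxy v hv hv1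
    have hd : 0 < ‖x - y‖ := norm_pos_iff.2 (sub_ne_zero.2 hxy)
    obtain ⟨hu, hs, hsum⟩ := hS4proj y hy v
    refine ⟨ps y v, hs, ?_⟩
    have e : v - ps y v = pu y v := by rw [sub_eq_iff_eq_add]; exact hsum.symm
    rw [e]
    have hdβ : 0 < ‖x - y‖ ^ β := Real.rpow_pos_of_pos hd _
    have hpu : ‖pu y v‖ ≤ l₀ := by
      have := (pu y).le_opNorm v
      rw [hv1, mul_one] at this
      exact this.trans (hS4 y hy).1
    have hps : ‖ps y v‖ ≤ l₀ := by
      have := (ps y).le_opNorm v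
      rw [hv1, mul_one] at this
      exact this.trans (hS4 y hy).2
    rcases le_or_gt ‖x - y‖ 1 with h1 | h1
    · obtain ⟨n, hn1, hn2⟩ := aux_choose ‖x - y‖ α lam1 lam2 a hd h1 hα hlam ha0 hlog
      rw [← hβ] at hn2
      have hB := aux_bound f Λ α L' L b a hfΛ hα hL' hHolder hL hLip hb ha2 (hΓs hx) (hΓs hy) n
      have hB' : ‖fwdDeriv f n x - fwdDeriv f n y‖ ≤ C * Real.exp (n * lam2) := by
        refine hB.trans ?_
        rw [mul_assoc]
        exact mul_le_mul (le_abs_self _) hn1 (by positivity) hC0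
      have t1 : ‖fwdDeriv f n x v‖ ≤ l₀ * Real.exp (n * lam2) := by
        simpa [hv1] using hS3 x hx n v hv
      have t2 : ‖(fwdDeriv f n x - fwdDeriv f n y) v‖ ≤ C * Real.exp (n * lam2) := by
        have := (fwdDeriv f n x - fwdDeriv f n y).le_opNorm v
        rw [hv1, mul_one] at this
        exact this.trans hB'
      have t3 : ‖fwdDeriv f n y (ps y v)‖ ≤ l₀ * Real.exp (n * lam2) * l₀ :=
        (hS3 y hy n _ hs).trans (mul_le_mul_of_nonneg_left hps (by positivity))
      have e2 : fwdDeriv f n y (pu y v) = fwdDeriv f n x v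
          - (fwdDeriv f n x - fwdDeriv f n y) v - fwdDeriv f n y (ps y v) := by
        rw [← e]; simp
      have t4 : ‖fwdDeriv f n y (pu y v)‖ ≤ (l₀ + l₀ * l₀ + C) * Real.exp (n * lam2) := by
        rw [e2]
        refine (norm_sub_le _ _).trans ?_
        have := norm_sub_le (fwdDeriv f n x v) ((fwdDeriv f n x - fwdDeriv f n y) v)
        linarith
      have t5 := (hS2 y hy n _ hu).trans t4
      have t6 : l₀⁻¹ * Real.exp (n * lam1) * ‖pu y v‖ ≤
          l₀⁻¹ * Real.exp (n * lam1) * (M * ‖x - y‖ ^ β) := by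
        refine t5.trans ((mul_le_mul_of_nonneg_left hn2 (by positivity)).trans (le_of_eq ?_))
        rw [hM]; field_simp
      have t7 := le_of_mul_le_mul_left t6 (by positivity)
      nlinarith
    · have : 1 ≤ ‖x - y‖ ^ β := Real.one_le_rpow h1.le hβ0.le
      nlinarith
  refine ⟨2 * (M + l₀), by positivity, ?_⟩
  intro x hx y hy
  by_cases hxy : x = y
  · subst hxy
    rw [gapDist, Metric.hausdorffDist_self_zero]
    positivity
  · rw [mul_assoc]
    refine aux_gap _ _ _ (by positivity) (key x hx y hy hxy) ?_
    rw [norm_sub_rev]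
    exact key y hy x hx (Ne.symm hxy)
end
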